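/- Let F ⊆ ℝ^n (n ≥ 3) be compact with Hausdorff dimension strictly less than n − k − 1 for some integer k ≥ 1. Then the complement ℝ^n \ F is k-connected, i.e., π_i(ℝ^n \ F) = 0 for all 0 ≤ i ≤ k. -/

import Mathlib

open MeasureTheory

section Aux

open Set Filter Topology
open scoped NNReal ENNReal

theorem cover_of_dimH_lt {X : Type*} [EMetricSpace X] (F : Set X) (d : ℝ≥0)
    (h : dimH F < d) (ε : ℝ≥0) (hε : 0 < ε) :
    ∃ (t : ℕ → Set X) (b : ℕ → ℝ≥0), F ⊆ ⋃ n, t n ∧ (∀ n, Metric.ediam (t n) ≤ b n) ∧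
      (∀ n, 0 < b n) ∧ ∑' n, ((b n : ℝ≥0∞)) ^ (d : ℝ) ≤ ε := by
  borelize X
  have hd : 0 < (d : ℝ) := by
    have : (0 : ℝ≥0∞) < d := lt_of_le_of_lt (zero_le) h
    exact_mod_cast this
  have h0 := hausdorffMeasure_of_dimH_lt h
  rw [Measure.hausdorffMeasure_apply] at h0
  have h1 : (⨅ (t : ℕ → Set X) (_ : F ⊆ ⋃ n, t n) (_ : ∀ n, Metric.ediam (t n) ≤ 1),
          ∑' n, ⨆ _ : (t n).Nonempty, Metric.ediam (t n) ^ (d : ℝ)) < (ε / 2 : ℝ≥0) := by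
    have := le_iSup₂_of_le (f := fun (r : ℝ≥0∞) (_ : 0 < r) =>
      ⨅ (t : ℕ → Set X) (_ : F ⊆ ⋃ n, t n) (_ : ∀ n, Metric.ediam (t n) ≤ r),
          ∑' n, ⨆ _ : (t n).Nonempty, Metric.ediam (t n) ^ (d : ℝ)) 1 one_pos le_rfl
    rw [h0] at this
    refine lt_of_le_of_lt this ?_
    exact_mod_cast half_pos hε
  simp only [iInf_lt_iff] at h1
  obtain ⟨t, hF, hdiam, hsum⟩ := h1
  have hne : ∀ n, (⨆ _ : (t n).Nonempty, Metric.ediam (t n) ^ (d : ℝ)) =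
      Metric.ediam (t n) ^ (d : ℝ) := by
    intro n
    rcases (t n).eq_empty_or_nonempty with h | h
    · simp [h, hd]
    · simp [h]
  simp only [hne] at hsum
  obtain ⟨e, he, hesum⟩ := ENNReal.exists_pos_sum_of_countable
    (ε := ((ε / 2 : ℝ≥0) : ℝ≥0∞)) (by simpa using hε.ne') ℕ
  refine ⟨t, fun n => max (Metric.ediam (t n)).toNNReal (e n ^ (1 / (d : ℝ))), hF, ?_, ?_, ?_⟩
  · intro n
    have : Metric.ediam (t n) ≠ ∞ := ((hdiam n).trans_lt ENNReal.one_lt_top).ne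
    rw [ENNReal.coe_max, ENNReal.coe_toNNReal this]
    exact le_max_left _ _
  · intro n
    exact lt_max_of_lt_right (NNReal.rpow_pos (he n))
  · calc _ ≤ ∑' n, (Metric.ediam (t n) ^ (d : ℝ) + e n) := by
          refine ENNReal.tsum_le_tsum fun n => ?_
          have : Metric.ediam (t n) ≠ ∞ := ((hdiam n).trans_lt ENNReal.one_lt_top).ne
          rw [ENNReal.coe_max, ENNReal.coe_toNNReal this]
          rcases max_cases (Metric.ediam (t n)) ((e n ^ (1 / (d : ℝ)) : ℝ≥0) : ℝ≥0∞) with h | h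
          · rw [h.1]; exact le_self_add
          · rw [h.1, ENNReal.coe_rpow_of_nonneg _ (by positivity), ← ENNReal.rpow_mul]
            rw [one_div_mul_cancel hd.ne', ENNReal.rpow_one]
            exact le_add_self
      _ = _ := ENNReal.tsum_add
      _ ≤ (ε / 2 : ℝ≥0) + (ε / 2 : ℝ≥0) := add_le_add hsum.le hesum.le
      _ = ε := by rw [← ENNReal.coe_add, add_halves]

theorem exists_nat_inv_approx (b : ℝ≥0) (hb : 0 < b) (hb1 : b ≤ 1) :
    ∃ N : ℕ, 0 < N ∧ b ≤ (N : ℝ≥0)⁻¹ ∧ (N : ℝ≥0)⁻¹ ≤ 2 * b := by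
  have h1 : 1 ≤ b⁻¹ := (one_le_inv₀ hb).2 hb1
  have hN : 0 < ⌊b⁻¹⌋₊ := Nat.floor_pos.2 h1
  have hN' : (0 : ℝ≥0) < ⌊b⁻¹⌋₊ := by exact_mod_cast hN
  refine ⟨⌊b⁻¹⌋₊, hN, ?_, ?_⟩
  · rw [le_inv_comm₀ hb hN']
    exact Nat.floor_le zero_le
  · have h2 := Nat.lt_floor_add_one b⁻¹
    have h3 : b⁻¹ ≤ 2 * (⌊b⁻¹⌋₊ : ℝ≥0) := by
      have : (1 : ℝ≥0) ≤ ⌊b⁻¹⌋₊ := by exact_mod_cast hN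
      refine h2.le.trans ?_
      rw [two_mul]; gcongr
    rw [inv_le_iff_one_le_mul₀ hN']
    calc (1 : ℝ≥0) = b * b⁻¹ := (mul_inv_cancel₀ hb.ne').symm
      _ ≤ b * (2 * (⌊b⁻¹⌋₊ : ℝ≥0)) := by gcongr
      _ = _ := by ring

theorem dimH_prod_cube_le {X : Type*} [EMetricSpace X] (F : Set X) (d : ℝ≥0)
    (h : dimH F < d) (m : ℕ) :
    dimH (F ×ˢ {w : Fin m → ℝ | ∀ j, w j ∈ Ioo (0 : ℝ) 1}) ≤ ((d + m : ℝ≥0) : ℝ≥0∞) := by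
  borelize (X × (Fin m → ℝ))
  have hd : 0 < (d : ℝ) := by
    have : (0 : ℝ≥0∞) < d := lt_of_le_of_lt (zero_le) h
    exact_mod_cast this
  apply dimH_le_of_hausdorffMeasure_ne_top
  let ε : ℕ → ℝ≥0 := fun n => ((n : ℝ≥0) + 1)⁻¹
  have hε : ∀ n, 0 < ε n := fun n => by positivity
  have hε1 : ∀ n, ε n ≤ 1 := fun n => inv_le_one_of_one_le₀ (by simp)
  have hε0 : Tendsto (fun n => ((ε n : ℝ≥0) : ℝ≥0∞)) atTop (𝓝 0) := by
    have : Tendsto ε atTop (𝓝 0) := by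
      simpa [ε] using tendsto_one_div_add_atTop_nhds_zero_nat (𝕜 := ℝ≥0)
    simpa using ENNReal.tendsto_coe.2 this
  choose t b htF htb hb hsum using fun n => cover_of_dimH_lt F d h (ε n) (hε n)
  have hbε : ∀ n k, (b n k : ℝ≥0∞) ≤ (ε n : ℝ≥0∞) ^ (1 / (d : ℝ)) := by
    intro n k
    rw [one_div, ENNReal.le_rpow_inv_iff hd]
    exact (ENNReal.le_tsum k).trans (hsum n)
  have hb1 : ∀ n k, b n k ≤ 1 := by
    intro n k
    have := (hbε n k).trans (ENNReal.rpow_le_one (by exact_mod_cast hε1 n) (by positivity))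
    exact_mod_cast this
  choose N hN hbN hNb using fun n k => exists_nat_inv_approx (b n k) (hb n k) (hb1 n k)
  let T : ∀ n : ℕ, (Σ k : ℕ, (Fin m → Fin (N n k))) → Set (X × (Fin m → ℝ)) := fun n p =>
    t n p.1 ×ˢ {w | ∀ j, w j ∈ Icc (((p.2 j : ℕ) : ℝ) / N n p.1) ((((p.2 j : ℕ) : ℝ) + 1) / N n p.1)}
  have hT : ∀ n p, Metric.ediam (T n p) ≤ (((N n p.1 : ℝ≥0)⁻¹ : ℝ≥0) : ℝ≥0∞) := by
    rintro n ⟨k, c⟩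
    refine Metric.ediam_le ?_
    rintro ⟨x, w⟩ ⟨hx, hw⟩ ⟨y, u⟩ ⟨hy, hu⟩
    rw [Prod.edist_eq]
    refine max_le ?_ ?_
    · refine (Metric.edist_le_ediam_of_mem hx hy).trans ((htb n k).trans ?_)
      exact_mod_cast hbN n k
    · rw [edist_pi_le_iff]
      intro j
      have h1 := hw j
      have h2 := hu j
      have h3 : dist (w j) (u j) ≤ (N n k : ℝ)⁻¹ := by
        refine (Real.dist_le_of_mem_Icc h1 h2).trans (le_of_eq ?_)
        ring
      rw [edist_dist]
      refine (ENNReal.ofReal_le_ofReal h3).trans (le_of_eq ?_)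
      rw [← ENNReal.ofReal_coe_nnreal]
      simp
  have hcov : ∀ n, F ×ˢ {w : Fin m → ℝ | ∀ j, w j ∈ Ioo (0 : ℝ) 1} ⊆ ⋃ p, T n p := by
    rintro n ⟨x, w⟩ ⟨hx, hw⟩
    obtain ⟨k, hk⟩ := mem_iUnion.1 (htF n hx)
    have hN' : (0 : ℝ) < N n k := by exact_mod_cast hN n k
    refine mem_iUnion.2 ⟨⟨k, fun j => ⟨⌊w j * N n k⌋₊, ?_⟩⟩, hk, ?_⟩
    · rw [Nat.floor_lt (mul_nonneg (hw j).1.le hN'.le)]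
      nlinarith [(hw j).2]
    · intro j
      constructor
      · simp only
        rw [div_le_iff₀ hN']
        exact Nat.floor_le (mul_nonneg (hw j).1.le hN'.le)
      · simp only
        rw [le_div_iff₀ hN']
        exact (Nat.lt_floor_add_one _).le
  have hmain := Measure.hausdorffMeasure_le_liminf_tsum (((d + m : ℝ≥0) : ℝ))
    (F ×ˢ {w : Fin m → ℝ | ∀ j, w j ∈ Ioo (0 : ℝ) 1}) (l := atTop)
    (fun n => 2 * (ε n : ℝ≥0∞) ^ (1 / (d : ℝ))) (by
      have h1 : Tendsto (fun n => (ε n : ℝ≥0∞) ^ (1 / (d : ℝ))) atTop (𝓝 (0 ^ (1 / (d : ℝ)))) :=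
        (ENNReal.continuous_rpow_const.tendsto _).comp hε0
      rw [ENNReal.zero_rpow_of_pos (by positivity)] at h1
      simpa using ENNReal.Tendsto.const_mul h1 (Or.inr (by simp : (2 : ℝ≥0∞) ≠ ∞))) T
    (Eventually.of_forall fun n p => (hT n p).trans (by
      calc (((N n p.1 : ℝ≥0)⁻¹ : ℝ≥0) : ℝ≥0∞) ≤ ((2 * b n p.1 : ℝ≥0) : ℝ≥0∞) := by
            exact_mod_cast hNb n p.1
        _ = 2 * (b n p.1 : ℝ≥0∞) := by simp
        _ ≤ _ := by gcongr; exact hbε _ _))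
    (Eventually.of_forall hcov)
  have hbound : ∀ n, ∑' p, Metric.ediam (T n p) ^ ((d + m : ℝ≥0) : ℝ) ≤ 2 ^ (d : ℝ) := by
    intro n
    rw [ENNReal.tsum_sigma']
    calc _ ≤ ∑' k, (2 ^ (d : ℝ) * (b n k : ℝ≥0∞) ^ (d : ℝ)) := by
          refine ENNReal.tsum_le_tsum fun k => ?_
          have hN0 : (N n k : ℝ≥0) ≠ 0 := by exact_mod_cast (hN n k).ne'
          calc _ ≤ ∑' c : Fin m → Fin (N n k),
                ((((N n k : ℝ≥0)⁻¹ : ℝ≥0) : ℝ≥0∞)) ^ ((d + m : ℝ≥0) : ℝ) := by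
                refine ENNReal.tsum_le_tsum fun c => ?_
                exact ENNReal.rpow_le_rpow (hT n ⟨k, c⟩) (by positivity)
            _ = ((((N n k : ℝ≥0)⁻¹ ^ (d : ℝ) : ℝ≥0)) : ℝ≥0∞) := by
                rw [tsum_fintype, Finset.sum_const, Finset.card_univ, Fintype.card_fun,
                  Fintype.card_fin, Fintype.card_fin, nsmul_eq_mul,
                  ← ENNReal.coe_rpow_of_nonneg _ (by positivity)]
                norm_cast
                rw [NNReal.coe_add, NNReal.rpow_add (inv_ne_zero hN0), NNReal.coe_natCast,
                  NNReal.rpow_natCast]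
                push_cast
                rw [mul_comm (_ ^ (d : ℝ)), ← mul_assoc, ← mul_pow, mul_inv_cancel₀ hN0, one_pow, one_mul]
            _ ≤ (((2 * b n k) ^ (d : ℝ) : ℝ≥0) : ℝ≥0∞) := by
                have := NNReal.rpow_le_rpow (hNb n k) hd.le
                exact_mod_cast this
            _ = _ := by
                rw [ENNReal.coe_rpow_of_nonneg _ hd.le, ENNReal.coe_mul,
                  ENNReal.mul_rpow_of_nonneg _ _ hd.le]
                simp
      _ = 2 ^ (d : ℝ) * ∑' k, (b n k : ℝ≥0∞) ^ (d : ℝ) := ENNReal.tsum_mul_left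
      _ ≤ 2 ^ (d : ℝ) * 1 := by
          gcongr
          exact (hsum n).trans (by exact_mod_cast hε1 n)
      _ = _ := mul_one _
  have hfin : liminf (fun n => ∑' p, Metric.ediam (T n p) ^ ((d + m : ℝ≥0) : ℝ)) atTop
      ≤ 2 ^ (d : ℝ) :=
    (liminf_le_liminf (Eventually.of_forall hbound)).trans (by simp)
  refine ((hmain.trans hfin).trans_lt ?_).ne
  exact ENNReal.rpow_lt_top_of_nonneg hd.le (by simp)

theorem exists_perturb {n m : ℕ} (F : Set (EuclideanSpace ℝ (Fin n))) 
    (hdim : dimH F + m < n) (A : (Fin m → ℝ) → EuclideanSpace ℝ (Fin n))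
    (hA : ContDiff ℝ 1 A)
    (hbd : ∀ w : Fin m → ℝ, (∀ j, w j ∈ Icc (0 : ℝ) 1) → (∃ j, w j = 0 ∨ w j = 1) → A w ∉ F) :
    ∃ B : (Fin m → ℝ) → EuclideanSpace ℝ (Fin n), Continuous B ∧
      (∀ w : Fin m → ℝ, (∀ j, w j ∈ Icc (0 : ℝ) 1) → B w ∉ F) ∧
      (∀ w : Fin m → ℝ, (∃ j, w j = 0 ∨ w j = 1) → B w = A w) := by
  obtain ⟨d, hd1, hd2⟩ : ∃ d : ℝ≥0, dimH F < d ∧ (d : ℝ≥0∞) + m < n := by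
    have h1 : dimH F < (n : ℝ≥0∞) - m := lt_tsub_iff_right.2 hdim
    obtain ⟨d, hd1, hd2⟩ := ENNReal.lt_iff_exists_nnreal_btwn.1 h1
    exact ⟨d, hd1, lt_tsub_iff_right.1 hd2⟩
  let φ : (Fin m → ℝ) → ℝ := fun w => ∏ j, (w j * (1 - w j))
  have hφ : ContDiff ℝ 1 φ := by
    apply contDiff_prod
    intro j _
    fun_prop
  let S : Set (Fin m → ℝ) := {w | ∀ j, w j ∈ Ioo (0 : ℝ) 1}
  have hφS : ∀ w ∈ S, φ w ≠ 0 := fun w hw => by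
    refine (Finset.prod_pos fun j _ => ?_).ne'
    exact mul_pos (hw j).1 (by linarith [(hw j).2])
  have hφ0 : ∀ w : Fin m → ℝ, (∃ j, w j = 0 ∨ w j = 1) → φ w = 0 := by
    rintro w ⟨j, hj⟩
    refine Finset.prod_eq_zero (Finset.mem_univ j) ?_
    rcases hj with h | h <;> simp [h]
  have hS : Convex ℝ S := by
    have : S = Set.pi univ fun _ => Ioo (0 : ℝ) 1 := by ext w; simp [S]
    rw [this]
    exact convex_pi fun _ _ => convex_Ioo 0 1
  let G : EuclideanSpace ℝ (Fin n) × (Fin m → ℝ) → EuclideanSpace ℝ (Fin n) :=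
    fun p => (φ p.2)⁻¹ • (p.1 - A p.2)
  have hG : ContDiffOn ℝ 1 G (univ ×ˢ S) := by
    refine ContDiffOn.smul (f := fun p : EuclideanSpace ℝ (Fin n) × (Fin m → ℝ) => (φ p.2)⁻¹)
      (g := fun p => p.1 - A p.2) ?_ ?_
    · exact ContDiffOn.inv (hφ.comp contDiff_snd).contDiffOn fun p hp => hφS _ hp.2
    · exact (contDiff_fst.sub (hA.comp contDiff_snd)).contDiffOn
  have hdense : Dense (G '' (F ×ˢ S))ᶜ := by
    refine hG.dense_compl_image_of_dimH_lt_finrank (convex_univ.prod hS)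
      (prod_mono (subset_univ _) Subset.rfl) ?_
    refine (dimH_prod_cube_le F d hd1 m).trans_lt ?_
    simpa using hd2
  obtain ⟨v, hv⟩ := hdense.nonempty
  refine ⟨fun w => A w + φ w • v, hA.continuous.add (hφ.continuous.smul continuous_const), ?_, ?_⟩
  · intro w hw hwF
    change A w + φ w • v ∈ F at hwF
    by_cases hb : ∃ j, w j = 0 ∨ w j = 1
    · rw [hφ0 w hb, zero_smul, add_zero] at hwF
      exact hbd w hw hb hwF
    · push Not at hb
      have hwS : w ∈ S := fun j =>
        ⟨lt_of_le_of_ne (hw j).1 (hb j).1.symm, lt_of_le_of_ne (hw j).2 (hb j).2⟩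
      refine hv ⟨(A w + φ w • v, w), ⟨hwF, hwS⟩, ?_⟩
      simp only [G, add_sub_cancel_left]
      exact inv_smul_smul₀ (hφS w hwS) v
  · intro w hw
    simp [hφ0 w hw]

theorem compl_nonempty_aux {n : ℕ} (F : Set (EuclideanSpace ℝ (Fin n))) 
    (hdim : dimH F + (1 : ℕ) < n) : IsPathConnected Fᶜ := by
  have hne : (Fᶜ).Nonempty := by
    refine (dense_compl_of_dimH_lt_finrank ?_).nonempty
    simpa using lt_of_le_of_lt le_self_add hdim
  rw [isPathConnected_iff]
  refine ⟨hne, fun a ha b hb => ?_⟩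
  obtain ⟨B, hB, hBF, hBA⟩ := exists_perturb F hdim (fun w => (1 - w 0) • a + w 0 • b)
    (by fun_prop) (by
      rintro w - ⟨j, hj⟩
      obtain rfl : j = 0 := Subsingleton.elim _ _
      rcases hj with h | h
      · simpa [h] using ha
      · simpa [h] using hb)
  refine ⟨⟨⟨fun t : unitInterval => B (fun _ => (t : ℝ)), by fun_prop⟩, ?_, ?_⟩, ?_⟩
  · simp [hBA (fun _ => (0 : ℝ)) ⟨0, by simp⟩]
  · simp [hBA (fun _ => (1 : ℝ)) ⟨0, by simp⟩]
  · intro t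
    exact hBF _ fun _ => t.2

/-- Smooth approximation equal to the base point on the boundary. -/
theorem exists_smooth_approx {n i : ℕ} (x : EuclideanSpace ℝ (Fin n))
    (f : (Fin i → unitInterval) → EuclideanSpace ℝ (Fin n)) (hf : Continuous f)
    (hfx : ∀ y ∈ Cube.boundary (Fin i), f y = x) (δ : ℝ) (hδ : 0 < δ) :
    ∃ g : (Fin i → ℝ) → EuclideanSpace ℝ (Fin n), ContDiff ℝ 1 g ∧
      (∀ y : Fin i → unitInterval, dist (g (fun j => y j)) (f y) < δ) ∧
      (∀ y ∈ Cube.boundary (Fin i), g (fun j => y j) = x) := by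
  set ε := δ / 4 with hε
  have hε0 : 0 < ε := by positivity
  have hfu : UniformContinuous f := CompactSpace.uniformContinuous_of_continuous hf
  have hproj : UniformContinuous (fun w : Fin i → ℝ =>
      fun j => projIcc (0 : ℝ) 1 zero_le_one (w j)) := by
    rw [uniformContinuous_pi]
    intro j
    exact (LipschitzWith.projIcc zero_le_one).uniformContinuous.comp
      (Pi.uniformContinuous_proj _ j)
  obtain ⟨P, hP, hPf⟩ := (hfu.comp hproj).exists_contDiff_dist_le hε0
  have hPf' : ∀ y : Fin i → unitInterval, dist (P (fun j => y j)) (f y) < ε := by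
    intro y
    have := hPf (fun j => y j)
    simpa using this
  let θ : (Fin i → ℝ) → ℝ := fun w => Real.smoothTransition (‖P w - x‖ ^ 2 / ε ^ 2 - 1)
  have hP1 : ContDiff ℝ 1 P := hP.of_le (by exact_mod_cast le_top)
  have hθ : ContDiff ℝ 1 θ := by
    refine Real.smoothTransition.contDiff.comp ?_
    exact (((hP1.sub contDiff_const).norm_sq ℝ).div_const _).sub contDiff_const
  refine ⟨fun w => x + θ w • (P w - x), ?_, ?_, ?_⟩
  · exact contDiff_const.add (hθ.smul (hP1.sub contDiff_const))
  · intro y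
    set w : Fin i → ℝ := fun j => y j
    have h1 := hPf' y
    have h2 : dist (x + θ w • (P w - x)) (P w) ≤ 2 * ε := by
      rw [dist_eq_norm]
      have : x + θ w • (P w - x) - P w = (θ w - 1) • (P w - x) := by
        rw [sub_smul, one_smul]; abel
      rw [this, norm_smul]
      rcases le_total (2 * ε) ‖P w - x‖ with h | h
      · have : θ w = 1 := by
          apply Real.smoothTransition.one_of_one_le
          rw [le_sub_iff_add_le, le_div_iff₀ (by positivity)]
          nlinarith
        rw [this]; simp; positivity
      · have h3 : ‖θ w - 1‖ ≤ 1 := by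
          rw [Real.norm_eq_abs, abs_le]
          have := Real.smoothTransition.nonneg (‖P w - x‖ ^ 2 / ε ^ 2 - 1)
          have := Real.smoothTransition.le_one (‖P w - x‖ ^ 2 / ε ^ 2 - 1)
          constructor <;> simp only [θ] <;> linarith
        calc _ ≤ 1 * (2 * ε) := by gcongr
          _ = _ := one_mul _
    have := dist_triangle (x + θ w • (P w - x)) (P w) (f y)
    show dist (x + θ w • (P w - x)) (f y) < δ
    linarith
  · intro y hy
    set w : Fin i → ℝ := fun j => y j
    have h1 := hPf' y
    rw [hfx y hy, dist_eq_norm] at h1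
    have : θ w = 0 := by
      apply Real.smoothTransition.zero_of_nonpos
      rw [sub_nonpos, div_le_one (by positivity)]
      gcongr
    simp [this]

theorem homotopic_const {n i : ℕ} (F : Set (EuclideanSpace ℝ (Fin n))) (hF : IsCompact F)
    (hdim : dimH F + (i + 1 : ℕ) < n) (x : (Fᶜ : Set (EuclideanSpace ℝ (Fin n))))
    (f : GenLoop (Fin i) (Fᶜ : Set (EuclideanSpace ℝ (Fin n))) x) :
    GenLoop.Homotopic f GenLoop.const := by
  have hfc : Continuous (fun y => (f y : EuclideanSpace ℝ (Fin n))) :=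
    continuous_subtype_val.comp f.1.continuous
  obtain ⟨δ, hδ, hδF⟩ := (isCompact_range hfc).exists_thickening_subset_open
    hF.isClosed.isOpen_compl (by rintro _ ⟨y, rfl⟩; exact (f y).2)
  have hδF' : ∀ y z, dist z (f y : EuclideanSpace ℝ (Fin n)) < δ → z ∈ Fᶜ := fun y z h =>
    hδF (Metric.mem_thickening_iff.2 ⟨_, ⟨y, rfl⟩, h⟩)
  obtain ⟨g, hg, hgf, hgx⟩ := exists_smooth_approx (x : EuclideanSpace ℝ (Fin n))
    (fun y => (f y : EuclideanSpace ℝ (Fin n))) hfc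
    (fun y hy => by rw [GenLoop.boundary f y hy]) δ hδ
  have hgc := hg.continuous
  let g' : C(Fin i → unitInterval, (Fᶜ : Set (EuclideanSpace ℝ (Fin n)))) :=
    ⟨fun y => ⟨g (fun j => y j), hδF' y _ (hgf y)⟩, by
      apply Continuous.subtype_mk; fun_prop⟩
  have H1 : f.1.HomotopicRel g' (Cube.boundary (Fin i)) := by
    refine ⟨⟨⟨⟨fun p => ⟨(1 - (p.1 : ℝ)) • (f p.2 : EuclideanSpace ℝ (Fin n)) +
      (p.1 : ℝ) • g (fun j => p.2 j), ?_⟩, ?_⟩, ?_, ?_⟩, ?_⟩⟩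
    · apply hδF' p.2
      rw [dist_eq_norm]
      have : (1 - (p.1 : ℝ)) • (f p.2 : EuclideanSpace ℝ (Fin n)) +
        (p.1 : ℝ) • g (fun j => p.2 j) - (f p.2 : EuclideanSpace ℝ (Fin n)) =
        (p.1 : ℝ) • (g (fun j => p.2 j) - (f p.2 : EuclideanSpace ℝ (Fin n))) := by
        rw [sub_smul, smul_sub, one_smul]; abel
      rw [this, norm_smul, ← dist_eq_norm, Real.norm_of_nonneg p.1.2.1]
      exact (mul_le_of_le_one_left dist_nonneg p.1.2.2).trans_lt (hgf p.2)
    · apply Continuous.subtype_mk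
      have := hfc.comp (continuous_snd (X := unitInterval))
      simp only [Function.comp_def] at this
      fun_prop
    · intro y; ext1; simp
    · intro y; ext1; simp [g']
    · intro t y hy
      ext1
      simp [hgx y hy, GenLoop.boundary f y hy, ← add_smul]
  have H2 : g'.HomotopicRel (GenLoop.const (x := x)).1 (Cube.boundary (Fin i)) := by
    obtain ⟨B, hB, hBF, hBA⟩ := exists_perturb F hdim
      (fun w => (1 - w 0) • g (fun j => w j.succ) + w 0 • (x : EuclideanSpace ℝ (Fin n)))
      (by
        have : ContDiff ℝ 1 (fun w : Fin (i + 1) → ℝ => g (fun j => w j.succ)) :=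
          hg.comp (by fun_prop)
        fun_prop) (by
        rintro w hw ⟨j, hj⟩
        let y : Fin i → unitInterval := fun j => ⟨w j.succ, hw _⟩
        have hy : (fun j => ((y j : unitInterval) : ℝ)) = fun j => w j.succ := rfl
        induction j using Fin.cases with
        | zero =>
          rcases hj with h | h
          · simpa [h] using hδF' y _ (hgf y)
          · have := x.2; rw [mem_compl_iff] at this; simpa [h] using this
        | succ j =>
          have := hgx y ⟨j, by
            rcases hj with h | h
            · left; ext; exact h
            · right; ext; exact h⟩
          rw [hy] at this
          simp only [this, ← add_smul]
          have := x.2; rw [mem_compl_iff] at this; simpa using this)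
    have hmem : ∀ p : unitInterval × (Fin i → unitInterval), ∀ j, 
        (Fin.cons (p.1 : ℝ) (fun j => (p.2 j : ℝ)) : Fin (i + 1) → ℝ) j ∈ Icc (0 : ℝ) 1 := by
      intro p j
      induction j using Fin.cases with
      | zero => exact p.1.2
      | succ j => exact (p.2 j).2
    refine ⟨⟨⟨⟨fun p => ⟨B (Fin.cons (p.1 : ℝ) (fun j => (p.2 j : ℝ))), hBF _ (hmem p)⟩, ?_⟩,
      ?_, ?_⟩, ?_⟩⟩
    · apply Continuous.subtype_mk
      refine hB.comp ?_
      refine continuous_pi fun j => ?_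
      induction j using Fin.cases with
      | zero => simp only [Fin.cons_zero]; fun_prop
      | succ j => simp only [Fin.cons_succ]; fun_prop
    · intro y; ext1
      simp [hBA (Fin.cons 0 _) ⟨0, by simp⟩, g']
    · intro y; ext1
      simp [hBA (Fin.cons 1 _) ⟨0, by simp⟩]
    · rintro t y ⟨j, hj⟩
      ext1
      have hgy := hgx y ⟨j, hj⟩
      have hb : ∃ l, (Fin.cons (t : ℝ) (fun j => (y j : ℝ)) : Fin (i + 1) → ℝ) l = 0 ∨
          (Fin.cons (t : ℝ) (fun j => (y j : ℝ)) : Fin (i + 1) → ℝ) l = 1 :=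
        ⟨j.succ, by rcases hj with h | h <;> simp [h]⟩
      simp [hBA _ hb, g', hgy, ← add_smul]
  exact H1.trans H2

end Aux

/-- If `F ⊆ ℝⁿ` (`n ≥ 3`) is compact with `dimH F < n - k - 1`, then `ℝⁿ \ F` is
`k`-connected: it is path-connected and its homotopy groups `π_i` vanish for `i ≤ k`. -/
theorem complement_k_connected_of_dimH_lt (n k : ℕ) (hn : 3 ≤ n) (hk : 1 ≤ k)
    (F : Set (EuclideanSpace ℝ (Fin n))) (hF : IsCompact F)
    (hdim : dimH F < (n : ENNReal) - k - 1) :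
    IsPathConnected Fᶜ ∧
      ∀ (x : (Fᶜ : Set (EuclideanSpace ℝ (Fin n)))), ∀ i ≤ k,
        Subsingleton (HomotopyGroup (Fin i) (Fᶜ : Set (EuclideanSpace ℝ (Fin n))) x) := by
  have key : ∀ i ≤ k, dimH F + (i + 1 : ℕ) < n := by
    intro i hi
    have h1 := lt_tsub_iff_right.1 (lt_tsub_iff_right.1 hdim)
    refine lt_of_le_of_lt ?_ h1
    have h2 : (i : ENNReal) ≤ k := by exact_mod_cast hi
    push_cast
    rw [add_assoc, add_comm (1 : ENNReal)]
    gcongr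
  refine ⟨compl_nonempty_aux F (key 0 (Nat.zero_le _)), fun x i hi => ⟨fun a b => ?_⟩⟩
  induction a using Quotient.inductionOn with | _ a =>
  induction b using Quotient.inductionOn with | _ b =>
  exact Quotient.sound ((homotopic_const F hF (key i hi) x a).trans
    (homotopic_const F hF (key i hi) x b).symm)
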